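/- Let A ⊂ ℝⁿ be a finite set whose convex hull has dimension n, let c_a > 0 for a ∈ A, and define g_A : ℝⁿ → ℝ by g_A(p) := ½·log(Σ_{a∈A} c_a·e^{2⟨a,p⟩}), so that ∇g_A(p) = Σ_{a∈A} a·c_a·e^{2⟨a,p⟩} / Σ_{a∈A} c_a·e^{2⟨a,p⟩}. Then the momentum map ∇g_A : ℝⁿ → ℝⁿ is injective, and its image is exactly the interior of the convex hull Conv(A). -/

import Mathlib

open Finset

noncomputable section

namespace SparseRandom

variable {n : ℕ}

/-- The momentum map `∇g_A(p) = (∑_a a·c_a·e^{2⟨a,p⟩}) / (∑_a c_a·e^{2⟨a,p⟩})` of the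
Kähler potential `g_A(p) = ½·log(∑_{a∈A} c_a·e^{2⟨a,p⟩})`. -/
def mom (A : Finset (Fin n → ℝ)) (c : (Fin n → ℝ) → ℝ) (p : Fin n → ℝ) : Fin n → ℝ :=
  (∑ a : A, c (a : Fin n → ℝ) * Real.exp (2 * ∑ j, (a : Fin n → ℝ) j * p j))⁻¹ •
    ∑ a : A, (c (a : Fin n → ℝ) * Real.exp (2 * ∑ j, (a : Fin n → ℝ) j * p j)) •
      (a : Fin n → ℝ)

end SparseRandom

open SparseRandom

/-!
For a point `y`, the function `f ↦ ∑ i, c i * exp (f (z i - y))` on the dual space has its critical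
points exactly at the `f` whose exponentially tilted mean is `y`. It grows at least linearly when
`y` is interior to the convex hull, so it attains its minimum: this gives surjectivity. If `f₁` and
`f₂` have the same tilted mean, the strict monotonicity of `exp` forces `f₂ - f₁` to be constant on
the points `z i`, hence zero: this gives injectivity. A mean with positive weights cannot lie on a
supporting hyperplane unless all the points do, so the image stays in the interior.
-/

namespace SparseRandom

lemma linearMap_eq_zero_of_forall_mem_eq {k V W : Type*} [Ring k] [AddCommGroup V] [Module k V]
    [AddCommGroup W] [Module k W] {S : Set V} (hS : affineSpan k S = ⊤) {f : V →ₗ[k] W} {r : W}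
    (hf : ∀ x ∈ S, f x = r) : f = 0 := by
  have hconst : f.toAffineMap = AffineMap.const k V r := AffineMap.ext_on hS hf
  have hr : ∀ x, f x = r := fun x => congrArg (· x) hconst
  ext x
  rw [hr x, ← hr 0, map_zero, LinearMap.zero_apply]

lemma finiteDimensional_of_affineSpan_eq_top {k V : Type*} [DivisionRing k] [AddCommGroup V]
    [Module k V] {S : Set V} (hfin : S.Finite) (hS : affineSpan k S = ⊤) :
    FiniteDimensional k V := by
  have := finiteDimensional_direction_affineSpan_of_finite k hfin
  rw [hS, AffineSubspace.direction_top] at this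
  exact Module.finite_def.2 (Module.Finite.iff_fg.1 this)

section CenterMass

variable {k ι E : Type*} [AddCommGroup E] {s : Finset ι} {z : ι → E} {y : E}

lemma centerMass_eq_iff_sum_smul_sub_eq_zero [Field k] [Module k E] {w : ι → k}
    (hw : ∑ i ∈ s, w i ≠ 0) : s.centerMass w z = y ↔ ∑ i ∈ s, w i • (z i - y) = 0 := by
  rw [centerMass, inv_smul_eq_iff₀ hw]
  simp only [smul_sub, sum_sub_distrib, ← sum_smul, sub_eq_zero]

lemma sum_mul_map_sub_eq_zero [Ring k] [Module k E] {w : ι → k}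
    (h : ∑ i ∈ s, w i • (z i - y) = 0) (f : E →ₗ[k] k) : ∑ i ∈ s, w i * f (z i - y) = 0 := by
  simpa only [map_sum, map_smul, smul_eq_mul, map_zero] using congrArg f h

end CenterMass

lemma centerMass_mem_interior_convexHull {ι E : Type*} [NormedAddCommGroup E] [NormedSpace ℝ E]
    {s : Finset ι} {w : ι → ℝ} {z : ι → E} (hspan : affineSpan ℝ (z '' s) = ⊤)
    (hw : ∀ i ∈ s, 0 < w i) :
    s.centerMass w z ∈ interior (convexHull ℝ (z '' s)) := by
  have := finiteDimensional_of_affineSpan_eq_top (s.finite_toSet.image z) hspan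
  have hs : s.Nonempty :=
    coe_nonempty.1 (AffineSubspace.nonempty_of_affineSpan_eq_top ℝ E E hspan).of_image
  by_contra hmem
  set m := s.centerMass w z with hm
  obtain ⟨f, hf_ne, hf_le⟩ := geometric_hahn_banach_of_nonempty_interior_point
    (convex_convexHull ℝ _) hmem (interior_convexHull_nonempty_iff_affineSpan_eq_top.2 hspan)
  have hle : ∀ i ∈ s, w i * f (z i - m) ≤ 0 := fun i hi => by
    have := hf_le (z i) (subset_convexHull ℝ _ (Set.mem_image_of_mem z hi))
    exact mul_nonpos_of_nonneg_of_nonpos (hw i hi).le (by rwa [map_sub, sub_nonpos])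
  have hsum : ∑ i ∈ s, w i * f (z i - m) = 0 := sum_mul_map_sub_eq_zero
    ((centerMass_eq_iff_sum_smul_sub_eq_zero (sum_pos hw hs).ne').1 hm.symm) f.toLinearMap
  have hconst : ∀ x ∈ z '' s, f.toLinearMap x = f m := by
    rintro _ ⟨i, hi, rfl⟩
    have := (sum_eq_zero_iff_of_nonpos hle).1 hsum i hi
    rwa [mul_eq_zero_iff_left (hw i hi).ne', map_sub, sub_eq_zero] at this
  exact hf_ne (ContinuousLinearMap.coe_inj.1 (linearMap_eq_zero_of_forall_mem_eq hspan hconst))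

lemma exp_sub_one_mul_self_pos {t : ℝ} (ht : t ≠ 0) : 0 < (Real.exp t - 1) * t := by
  rcases ht.lt_or_gt with h | h
  · exact mul_pos_of_neg_of_neg (sub_neg.2 (Real.exp_lt_one_iff.2 h)) h
  · exact mul_pos (sub_pos.2 (Real.one_lt_exp_iff.2 h)) h

lemma eq_zero_of_sum_mul_exp_mul_eq_sum_mul {ι : Type*} {s : Finset ι} {w t : ι → ℝ}
    (hw : ∀ i ∈ s, 0 < w i)
    (h : ∑ i ∈ s, w i * Real.exp (t i) * t i = ∑ i ∈ s, w i * t i) : ∀ i ∈ s, t i = 0 := by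
  have hnonneg : ∀ i ∈ s, 0 ≤ w i * ((Real.exp (t i) - 1) * t i) := fun i hi => by
    rcases eq_or_ne (t i) 0 with ht | ht
    · simp [ht]
    · exact (mul_pos (hw i hi) (exp_sub_one_mul_self_pos ht)).le
  have hsum : ∑ i ∈ s, w i * ((Real.exp (t i) - 1) * t i) = 0 := by
    rw [← sub_eq_zero, ← sum_sub_distrib] at h
    rw [← h]
    exact sum_congr rfl fun i _ => by ring
  intro i hi
  by_contra ht
  exact (mul_pos (hw i hi) (exp_sub_one_mul_self_pos ht)).ne'
    ((sum_eq_zero_iff_of_nonneg hnonneg).1 hsum i hi)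

lemma mul_norm_le_of_closedBall_subset_convexHull {E : Type*} [NormedAddCommGroup E]
    [NormedSpace ℝ E] {S : Set E} {y : E} {r M : ℝ} (hr : 0 < r)
    (hball : Metric.closedBall y r ⊆ convexHull ℝ S) {f : StrongDual ℝ E}
    (hf : ∀ x ∈ S, f (x - y) ≤ M) : r * ‖f‖ ≤ M := by
  have hhull : ∀ x ∈ convexHull ℝ S, f x ≤ f y + M :=
    convexHull_min (fun x hx => sub_le_iff_le_add'.1 (map_sub f x y ▸ hf x hx))
      (convex_halfSpace_le f.isLinear _)
  have hle : ∀ v ∈ Metric.closedBall (0 : E) r, f v ≤ M := fun v hv => by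
    have := hhull (y + v) (hball (by simpa using hv))
    rwa [map_add, add_le_add_iff_left] at this
  have hbound : ‖f‖ ≤ M / r := ContinuousLinearMap.opNorm_bound_of_ball_bound hr M f
    fun v hv => abs_le'.2 ⟨hle v hv, by simpa only [map_neg] using hle (-v) (by simpa using hv)⟩
  rwa [mul_comm, ← le_div_iff₀ hr]

section TiltedMean

variable {ι E : Type*} [Fintype ι] [NormedAddCommGroup E] [NormedSpace ℝ E]
  {z : ι → E} {c : ι → ℝ} {y : E}

/-- The mean of the points `z i` for the weights `c i`, exponentially tilted by the functional `f`.
It is the momentum map, with the parameter in the dual space. -/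
def tiltedMean (z : ι → E) (c : ι → ℝ) (f : StrongDual ℝ E) : E :=
  univ.centerMass (fun i => c i * Real.exp (f (z i))) z

/-- The partition function of the tilted weights after translating the point `y` to the origin. -/
def partitionFunction (z : ι → E) (c : ι → ℝ) (y : E) (f : StrongDual ℝ E) : ℝ :=
  ∑ i, c i * Real.exp (f (z i - y))

lemma tiltedMean_eq_iff [Nonempty ι] (hc : ∀ i, 0 < c i) {f : StrongDual ℝ E} :
    tiltedMean z c f = y ↔ ∑ i, (c i * Real.exp (f (z i - y))) • (z i - y) = 0 := by
  have hweights : (fun i => c i * Real.exp (f (z i - y))) =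
      Real.exp (-f y) • fun i => c i * Real.exp (f (z i)) := by
    ext i
    rw [Pi.smul_apply, smul_eq_mul, mul_left_comm, ← Real.exp_add, map_sub, neg_add_eq_sub]
  have hsum : 0 < ∑ i, c i * Real.exp (f (z i - y)) :=
    sum_pos (fun i _ => mul_pos (hc i) (Real.exp_pos _)) univ_nonempty
  rw [← centerMass_eq_iff_sum_smul_sub_eq_zero hsum.ne', hweights,
    centerMass_smul_left univ z (Real.exp_pos _).ne', tiltedMean]

lemma tiltedMean_injective (hspan : affineSpan ℝ (Set.range z) = ⊤) (hc : ∀ i, 0 < c i) :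
    Function.Injective (tiltedMean z c) := by
  intro f₁ f₂ heq
  have : Nonempty ι := Set.range_nonempty_iff_nonempty.1
    (AffineSubspace.nonempty_of_affineSpan_eq_top ℝ E E hspan)
  set m := tiltedMean z c f₂
  set g := f₂ - f₁ with hg
  have hf₁ := sum_mul_map_sub_eq_zero ((tiltedMean_eq_iff hc).1 heq) g.toLinearMap
  have hf₂ := sum_mul_map_sub_eq_zero ((tiltedMean_eq_iff (y := m) hc).1 rfl) g.toLinearMap
  have hweights : ∀ i, c i * Real.exp (f₂ (z i - m)) =
      c i * Real.exp (f₁ (z i - m)) * Real.exp (g (z i - m)) := fun i => by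
    rw [mul_assoc, ← Real.exp_add, hg, sub_apply, add_sub_cancel]
  simp only [hweights] at hf₂
  have hconst := eq_zero_of_sum_mul_exp_mul_eq_sum_mul
    (fun i _ => mul_pos (hc i) (Real.exp_pos _)) (hf₂.trans hf₁.symm)
  have hzero : g.toLinearMap = 0 := linearMap_eq_zero_of_forall_mem_eq hspan (r := g m) <| by
    rintro _ ⟨i, rfl⟩
    have := hconst i (mem_univ i)
    rwa [map_sub, sub_eq_zero] at this
  exact (sub_eq_zero.1 (ContinuousLinearMap.coe_inj.1 hzero)).symm

lemma hasFDerivAt_partitionFunction (f : StrongDual ℝ E) :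
    HasFDerivAt (partitionFunction z c y) (ContinuousLinearMap.apply ℝ ℝ
      (∑ i, (c i * Real.exp (f (z i - y))) • (z i - y))) f := by
  have hterm : ∀ i, HasFDerivAt (fun g : StrongDual ℝ E => c i * Real.exp (g (z i - y)))
      (c i • Real.exp (f (z i - y)) • ContinuousLinearMap.apply ℝ ℝ (z i - y)) f := fun i =>
    (ContinuousLinearMap.apply ℝ ℝ (z i - y)).hasFDerivAt.exp.const_mul (c i)
  simp only [map_sum, map_smul, ← smul_smul]
  exact HasFDerivAt.fun_sum fun i _ => hterm i

lemma exists_mul_norm_le_partitionFunction [Nonempty ι] (hc : ∀ i, 0 < c i)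
    (hy : y ∈ interior (convexHull ℝ (Set.range z))) :
    ∃ δ > 0, ∀ f, δ * ‖f‖ ≤ partitionFunction z c y f := by
  obtain ⟨r, hr, hball⟩ := Metric.nhds_basis_closedBall.mem_iff.1 (mem_interior_iff_mem_nhds.1 hy)
  obtain ⟨b, hb⟩ := Finite.exists_min c
  refine ⟨c b * r, mul_pos (hc b) hr, fun f => ?_⟩
  rw [mul_assoc, ← le_div_iff₀' (hc b)]
  refine mul_norm_le_of_closedBall_subset_convexHull hr hball ?_
  rintro _ ⟨i, rfl⟩
  rw [le_div_iff₀' (hc b)]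
  calc c b * f (z i - y) ≤ c b * Real.exp (f (z i - y)) := by
        gcongr
        · exact (hc b).le
        · linarith [Real.add_one_le_exp (f (z i - y))]
    _ ≤ c i * Real.exp (f (z i - y)) := by gcongr; exact hb i
    _ ≤ partitionFunction z c y f :=
        single_le_sum (f := fun i => c i * Real.exp (f (z i - y)))
          (fun j _ => (mul_pos (hc j) (Real.exp_pos _)).le) (mem_univ i)

lemma tiltedMean_eq_of_forall_partitionFunction_le [Nonempty ι] (hc : ∀ i, 0 < c i)
    {f : StrongDual ℝ E} (hmin : ∀ g, partitionFunction z c y f ≤ partitionFunction z c y g) :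
    tiltedMean z c f = y := by
  have hzero := IsLocalMin.hasFDerivAt_eq_zero (Filter.Eventually.of_forall hmin)
    (hasFDerivAt_partitionFunction f)
  exact (tiltedMean_eq_iff hc).2 (SeparatingDual.eq_zero_of_forall_dual_eq_zero (R := ℝ)
    fun g => congrArg (· g) hzero)

lemma mem_range_tiltedMean [FiniteDimensional ℝ E] (hc : ∀ i, 0 < c i)
    (hy : y ∈ interior (convexHull ℝ (Set.range z))) : y ∈ Set.range (tiltedMean z c) := by
  have : Nonempty ι := Set.range_nonempty_iff_nonempty.1
    (convexHull_nonempty_iff.1 ⟨y, interior_subset hy⟩)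
  have : ProperSpace (StrongDual ℝ E) := FiniteDimensional.proper ℝ _
  obtain ⟨δ, hδ, hbound⟩ := exists_mul_norm_le_partitionFunction hc hy
  have hcont : Continuous (partitionFunction z c y) :=
    continuous_iff_continuousAt.2 fun f => (hasFDerivAt_partitionFunction f).continuousAt
  have hcoercive : Filter.Tendsto (partitionFunction z c y) (Filter.cocompact _) Filter.atTop :=
    Filter.tendsto_atTop_mono hbound (tendsto_norm_cocompact_atTop.const_mul_atTop hδ)
  obtain ⟨f, hmin⟩ := hcont.exists_forall_le hcoercive
  exact ⟨f, tiltedMean_eq_of_forall_partitionFunction_le hc hmin⟩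

end TiltedMean

/-- The identification of `ℝⁿ` with its dual that sends `p` to `a ↦ 2⟨a, p⟩`, the exponent in
`mom`. -/
def twiceDotProductEquiv (n : ℕ) : (Fin n → ℝ) ≃ₗ[ℝ] StrongDual ℝ (Fin n → ℝ) :=
  LinearEquiv.smulOfNeZero ℝ _ 2 two_ne_zero ≪≫ₗ dotProductEquiv ℝ (Fin n) ≪≫ₗ
    LinearMap.toContinuousLinearMap

lemma twiceDotProductEquiv_apply {n : ℕ} (p a : Fin n → ℝ) :
    twiceDotProductEquiv n p a = 2 * ∑ j, a j * p j :=
  (smul_dotProduct (2 : ℝ) p a).trans (congrArg (2 * ·) (dotProduct_comm p a))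

lemma mom_eq_tiltedMean_comp {n : ℕ} (A : Finset (Fin n → ℝ)) (c : (Fin n → ℝ) → ℝ) :
    mom A c =
      tiltedMean (fun a : A => (a : Fin n → ℝ)) (fun a => c a) ∘ twiceDotProductEquiv n := by
  ext1 p
  simp only [mom, Function.comp_apply, tiltedMean, centerMass, twiceDotProductEquiv_apply]

end SparseRandom

theorem statement10_general {ι E : Type*} [Fintype ι] [NormedAddCommGroup E] [NormedSpace ℝ E]
    {z : ι → E} {c : ι → ℝ} (hspan : affineSpan ℝ (Set.range z) = ⊤) (hc : ∀ i, 0 < c i) :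
    Function.Injective (tiltedMean z c) ∧
      Set.range (tiltedMean z c) = interior (convexHull ℝ (Set.range z)) := by
  have := finiteDimensional_of_affineSpan_eq_top (Set.finite_range z) hspan
  refine ⟨tiltedMean_injective hspan hc,
    Set.Subset.antisymm ?_ fun y hy => mem_range_tiltedMean hc hy⟩
  rintro _ ⟨f, rfl⟩
  rw [← Set.image_univ, ← coe_univ] at hspan ⊢
  exact centerMass_mem_interior_convexHull hspan fun i _ => mul_pos (hc i) (Real.exp_pos _)

/-- If `A ⊂ ℝⁿ` is finite with full-dimensional convex hull and all
weights `c_a` positive, then the momentum map `∇g_A` is injective and its image is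
exactly the interior of `Conv(A)`. -/
theorem statement10 (n : ℕ) (A : Finset (Fin n → ℝ))
    (hdim : affineSpan ℝ (A : Set (Fin n → ℝ)) = ⊤)
    (c : (Fin n → ℝ) → ℝ) (hc : ∀ a ∈ A, 0 < c a) :
    Function.Injective (mom A c) ∧
      Set.range (mom A c) = interior (convexHull ℝ (A : Set (Fin n → ℝ))) := by
  obtain ⟨hinj, hrange⟩ := statement10_general (z := fun a : A => (a : Fin n → ℝ))
    (c := fun a => c a) (by simpa using hdim) fun a => hc a a.2
  rw [mom_eq_tiltedMean_comp, (twiceDotProductEquiv n).surjective.range_comp, hrange]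
  exact ⟨hinj.comp (twiceDotProductEquiv n).injective, by simp⟩
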